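/- Let n ≥ 4 and let A be a 5×n real matrix such that every 4×4 submatrix of A is tropically singular (i.e., A has tropical rank at most 3). Then there exists a lift Ã of A over K with rank(Ã) ≤ 3 (i.e., A has Kapranov rank at most 3). Equivalently, the 4×4 minors of a 5×n matrix of variables form a tropical basis. -/

import Mathlib

noncomputable section

/-- The field of generalized power series over `ℂ` with real exponents and
well-ordered support. -/
abbrev K : Type := HahnSeries ℝ ℂ

/-- An `m × m` real matrix is tropically singular if the minimum over all permutations `σ`
of `∑ i, M i (σ i)` is attained by at least two distinct permutations. -/
def TropSingular {m : ℕ} (M : Matrix (Fin m) (Fin m) ℝ) : Prop :=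
  ∃ σ τ : Equiv.Perm (Fin m), σ ≠ τ ∧
    (∑ i, M i (σ i)) = (∑ i, M i (τ i)) ∧
    ∀ ρ : Equiv.Perm (Fin m), (∑ i, M i (σ i)) ≤ ∑ i, M i (ρ i)

/-- `B` is a lift of the real matrix `A` over `K`: every entry of `B` is nonzero and its
valuation (order, the smallest exponent of the support) equals the corresponding entry of `A`. -/
def IsLift {d n : ℕ} (A : Matrix (Fin d) (Fin n) ℝ) (B : Matrix (Fin d) (Fin n) K) : Prop :=
  ∀ i j, B i j ≠ 0 ∧ (B i j).order = A i j

/-!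
Singularity of the `4 × 4` submatrices that avoid row `k` forces all columns onto a tropical
hyperplane with coefficient `∞` at `k`. Two such hyperplanes, with coefficients `u` and `v`, span a
pencil, and eliminating a coordinate `c` from it gives another hyperplane through all columns,
except when `u c - v c = u d - v d` for some `d` and a column attains its minimum exactly at
`{c, d}`. With five coordinates a third hyperplane rules out such columns for a suitable pair
`u`, `v`, so the columns lie on the stable intersection of two tropical hyperplanes. That
codimension-two tropical linear space is the tropicalization of the common kernel of two rows of
monomials with generic coefficients: for each column choose all but two coordinates generically of
the prescribed order and find the last two by Cramer's rule. These kernel vectors are the columns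
of a lift of rank at most `5 - 2`.
-/

section Isolation

variable {ι κ : Type*}

/-- Column `x` of `M` isolates row `i` at `u` if its entry in row `i` is the only minimum of the
column after adding `u i` to every row `i`. -/
def Isolates (M : Matrix ι κ ℝ) (u : ι → ℝ) (x : κ) (i : ι) : Prop :=
  ∀ j ≠ i, M i x + u i < M j x + u j

lemma Isolates.mono {M : Matrix ι κ ℝ} {u v : ι → ℝ} {x : κ} {i : ι} (h : Isolates M u x i)
    (huv : u ≤ v) (hi : v i = u i) : Isolates M v x i := fun j hj => by
  have := h j hj
  have := huv j
  linarith

/-- The row weights whose positive entries all sit at isolated rows. Where these are bounded above,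
their supremum isolates no row. -/
def supportedWeights (M : Matrix ι κ ℝ) : Set (ι → ℝ) :=
  {u | ∀ i, 0 < u i → ∃ x, Isolates M u x i}

lemma zero_mem_supportedWeights (M : Matrix ι κ ℝ) : 0 ∈ supportedWeights M :=
  fun _ hi => (lt_irrefl _ hi).elim

lemma supClosed_supportedWeights (M : Matrix ι κ ℝ) : SupClosed (supportedWeights M) := by
  intro u hu v hv i hi
  rcases le_total (u i) (v i) with h | h
  · have hsup : (u ⊔ v) i = v i := max_eq_right h
    obtain ⟨x, hx⟩ := hv i (hsup ▸ hi)
    exact ⟨x, hx.mono le_sup_right hsup⟩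
  · have hsup : (u ⊔ v) i = u i := max_eq_left h
    obtain ⟨x, hx⟩ := hu i (hsup ▸ hi)
    exact ⟨x, hx.mono le_sup_left hsup⟩

lemma forall_exists_isolates_of_lt {M : Matrix ι κ ℝ} {u : ι → ℝ} (hu : u ∈ supportedWeights M)
    {C : ℝ} (hC : ∀ x i j, M j x - M i x ≤ C) {i : ι} (hi₀ : 0 < u i) (hi : C < u i) (j : ι) :
    ∃ x, Isolates M u x j := by
  obtain ⟨x, hx⟩ := hu i hi₀
  obtain rfl | hji := eq_or_ne j i
  · exact ⟨x, hx⟩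
  · have := hx j hji
    have := hC x i j
    exact hu j (by linarith)

lemma exists_mem_forall_sub_lt [Finite ι] {P : Set (ι → ℝ)} (hP : SupClosed P) (hne : P.Nonempty)
    {δ : ℝ} (hδ : 0 < δ) : ∃ p ∈ P, ∀ i, (⨆ q : P, q.1 i) - δ < p i := by
  have := hne.to_subtype
  have hnear (i : ι) : ∃ q : P, (⨆ q : P, q.1 i) - δ < q.1 i :=
    exists_lt_of_lt_ciSup (sub_lt_self _ hδ)
  choose q hq using hnear
  obtain ⟨p, hp⟩ := hP.directedOn.directed_val.finite_le q
  exact ⟨p.1, p.2, fun i => (hq i).trans_le (hp i i)⟩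

lemma exists_pos_forall_add_lt [Finite ι] {y : ι → ℝ} {i : ι} (h : ∀ j ≠ i, y i < y j) :
    ∃ δ > 0, ∀ j ≠ i, y i + δ < y j - δ := by
  have hev : ∀ᶠ δ in nhdsWithin (0 : ℝ) (Set.Ioi 0), ∀ j ≠ i, y i + δ < y j - δ := by
    refine Filter.eventually_all.2 fun j => ?_
    by_cases hj : j = i
    · simp [hj]
    · filter_upwards [Ioo_mem_nhdsGT (half_pos (sub_pos.2 (h j hj)))] with δ hδ _
      linarith [hδ.2]
  obtain ⟨δ, hδ, hpos⟩ := (hev.and self_mem_nhdsWithin).exists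
  exact ⟨δ, hpos, hδ⟩

lemma not_isolates_iSup_supportedWeights [Finite ι] {M : Matrix ι κ ℝ}
    (hbdd : ∀ i, BddAbove (Set.range fun u : supportedWeights M => u.1 i)) (x : κ) (i : ι) :
    ¬ Isolates M (fun i => ⨆ u : supportedWeights M, u.1 i) x i := by
  classical
  intro hx
  set s : ι → ℝ := fun i => ⨆ u : supportedWeights M, u.1 i
  have hle {u : ι → ℝ} (hu : u ∈ supportedWeights M) (j : ι) : u j ≤ s j :=
    le_ciSup (hbdd j) ⟨u, hu⟩
  obtain ⟨δ, hδ, hgap⟩ := exists_pos_forall_add_lt (y := fun j => M j x + s j) hx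
  obtain ⟨p, hp, hps⟩ := exists_mem_forall_sub_lt (supClosed_supportedWeights M)
    ⟨0, zero_mem_supportedWeights M⟩ hδ
  have hpq : p ≤ Function.update p i (s i + δ) :=
    le_update_iff.2 ⟨by linarith [hle hp i], fun _ _ => le_rfl⟩
  have hq : Function.update p i (s i + δ) ∈ supportedWeights M := by
    intro j hj
    obtain rfl | hji := eq_or_ne j i
    · refine ⟨x, fun k hk => ?_⟩
      rw [Function.update_self, Function.update_of_ne hk]
      have := hgap k hk
      have := hps k
      linarith
    · have hqj : Function.update p i (s i + δ) j = p j := Function.update_of_ne hji _ _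
      obtain ⟨y, hy⟩ := hp j (hqj ▸ hj)
      exact ⟨y, hy.mono hpq hqj⟩
  have := hle hq i
  rw [Function.update_self] at this
  linarith

theorem exists_forall_exists_isolates_or_exists_forall_not_isolates [Finite ι] [Finite κ]
    (M : Matrix ι κ ℝ) :
    (∃ u, ∀ i, ∃ x, Isolates M u x i) ∨ ∃ u, ∀ x i, ¬ Isolates M u x i := by
  obtain ⟨C, hC⟩ := (Set.finite_range fun t : κ × ι × ι => M t.2.2 t.1 - M t.2.1 t.1).bddAbove
  have hC (x : κ) (i j : ι) : M j x - M i x ≤ C := hC ⟨(x, i, j), rfl⟩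
  by_cases h : ∃ u ∈ supportedWeights M, ∃ i, max C 0 < u i
  · obtain ⟨u, hu, i, hi⟩ := h
    obtain ⟨hCi, hi₀⟩ := max_lt_iff.1 hi
    exact Or.inl ⟨u, forall_exists_isolates_of_lt hu hC hi₀ hCi⟩
  · push Not at h
    exact Or.inr ⟨_, not_isolates_iSup_supportedWeights fun i =>
      ⟨max C 0, by rintro _ ⟨u, rfl⟩; exact h u.1 u.2 i⟩⟩

lemma not_tropSingular_of_isolates {m : ℕ} {M : Matrix (Fin m) (Fin m) ℝ} {u : Fin m → ℝ}
    (h : ∀ i, Isolates M u i i) : ¬ TropSingular M := by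
  have hlt (σ : Equiv.Perm (Fin m)) (hσ : σ ≠ 1) : ∑ i, M i i < ∑ i, M i (σ i) := by
    obtain ⟨k, hk⟩ : ∃ k, σ k ≠ k := by
      contrapose! hσ
      exact Equiv.ext hσ
    have hweighted : ∑ i, (M (σ i) (σ i) + u (σ i)) < ∑ i, (M i (σ i) + u i) := by
      refine Finset.sum_lt_sum (fun i _ => ?_) ⟨k, Finset.mem_univ k, h _ k hk.symm⟩
      obtain hi | hi := eq_or_ne i (σ i)
      · rw [← hi]
      · exact (h _ i hi).le
    rw [Equiv.sum_comp σ fun i => M i i + u i, Finset.sum_add_distrib,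
      Finset.sum_add_distrib] at hweighted
    linarith
  rintro ⟨σ, τ, hστ, heq, hmin⟩
  have hone := hmin 1
  obtain hσ | hτ : σ ≠ 1 ∨ τ ≠ 1 := by
    by_contra! hone
    exact hστ (hone.1.trans hone.2.symm)
  · exact (hlt σ hσ).not_ge hone
  · exact (hlt τ hτ).not_ge (heq ▸ hone)

theorem exists_forall_not_isolates_of_tropSingular [Finite κ] {m : ℕ} {M : Matrix (Fin m) κ ℝ}
    (h : ∀ c : Fin m → κ, Function.Injective c → TropSingular (M.submatrix id c)) :
    ∃ u, ∀ x i, ¬ Isolates M u x i := by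
  refine (exists_forall_exists_isolates_or_exists_forall_not_isolates M).resolve_left ?_
  rintro ⟨u, hu⟩
  choose c hc using hu
  refine not_tropSingular_of_isolates (u := u) (fun i => hc i) (h c fun i j hij => ?_)
  by_contra hne
  have hji := hc j i hne
  rw [← hij] at hji
  exact (hc i j (Ne.symm hne)).not_gt hji

end Isolation

section Hyperplane

variable {ι κ : Type*}

/-- The tropical hyperplane with coefficients `w i` for `i ≠ k` and coefficient `∞` at `k`: the
points `x` for which the minimum of `x i + w i` over `i ≠ k` is attained twice. -/
def tropHyperplane (k : ι) (w : ι → ℝ) : Set (ι → ℝ) :=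
  {x | ∀ i ≠ k, ∃ j ≠ k, j ≠ i ∧ x j + w j ≤ x i + w i}

lemma tropHyperplane_eq_of_forall_ne {k : ι} {v w : ι → ℝ} {t : ℝ}
    (h : ∀ i ≠ k, v i = w i + t) : tropHyperplane k v = tropHyperplane k w := by
  ext x
  refine forall₂_congr fun i hi => exists_congr fun j => and_congr_right fun hj => ?_
  rw [h i hi, h j hj, ← add_assoc, ← add_assoc, add_le_add_iff_right]

theorem exists_range_col_subset_tropHyperplane [Finite κ] {m : ℕ} {A : Matrix (Fin (m + 1)) κ ℝ}
    (h : ∀ (r : Fin m → Fin (m + 1)) (c : Fin m → κ),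
      Function.Injective r → Function.Injective c → TropSingular (A.submatrix r c))
    (k : Fin (m + 1)) : ∃ w, Set.range A.col ⊆ tropHyperplane k w := by
  obtain ⟨u, hu⟩ := exists_forall_not_isolates_of_tropSingular (M := A.submatrix k.succAbove id)
    fun c hc => h k.succAbove c Fin.succAbove_right_injective hc
  refine ⟨Fin.insertNth k 0 u, ?_⟩
  rintro _ ⟨x, rfl⟩ i hi
  obtain ⟨i, rfl⟩ := Fin.exists_succAbove_eq hi
  have hnot := hu x i
  simp only [Isolates, not_forall, not_lt] at hnot
  obtain ⟨j, hji, hle⟩ := hnot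
  refine ⟨k.succAbove j, Fin.succAbove_ne k j, Fin.succAbove_right_injective.ne hji, ?_⟩
  rwa [Fin.insertNth_apply_succAbove, Fin.insertNth_apply_succAbove]

/-- The codimension-two tropical linear space with Plücker coordinates
`min (u i + v k) (u k + v i)`: the stable intersection of the tropical hyperplanes with
coefficient vectors `u` and `v`. -/
def stableIntersection (u v : ι → ℝ) : Set (ι → ℝ) :=
  ⋂ k, tropHyperplane k fun i => min (u i + v k) (u k + v i)

end Hyperplane

section Elimination

variable {ι : Type*} {X : Set (ι → ℝ)} {a b c d : ι} {t : ℝ} {u v w : ι → ℝ}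

lemma tie_of_forall_lt_of_eq {x : ι → ℝ} (hxu : x ∈ tropHyperplane a u)
    (hxv : x ∈ tropHyperplane b v) (hca : c ≠ a) (hcb : c ≠ b) (huv : u c = v c)
    (hwu : ∀ j ≠ a, w j ≤ u j) (hwv : ∀ j ≠ b, w j ≤ v j) (hda : d ≠ a) (hwd : w d = u d)
    (hd : ∀ j, j ≠ c → j ≠ d → x d + w d < x j + w j) :
    d ≠ b ∧ u d = v d ∧ x c + u c = x d + u d := by
  have heq {j : ι} (hjc : j ≠ c) (hj : x j + w j ≤ x d + w d) : j = d := by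
    by_contra hjd
    exact (hd j hjc hjd).not_ge hj
  obtain ⟨j, hja, hjd, hj⟩ := hxu d hda
  obtain rfl : j = c := by
    by_contra hjc
    exact hjd (heq hjc (by linarith [hwu j hja]))
  obtain ⟨k, hka, hkj, hk⟩ := hxu j hca
  obtain rfl := heq hkj (by linarith [hwu k hka])
  obtain ⟨l, hlb, hlj, hl⟩ := hxv j hcb
  obtain rfl := heq hlj (by linarith [hwv l hlb])
  have := hwv l hlb
  exact ⟨hlb, by linarith, by linarith⟩

lemma tie_of_forall_lt {x : ι → ℝ} (hxu : x ∈ tropHyperplane a u)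
    (hxv : x ∈ tropHyperplane b v) (hca : c ≠ a) (hcb : c ≠ b) (huv : u c = v c)
    (hwu : ∀ j ≠ a, w j ≤ u j) (hwv : ∀ j ≠ b, w j ≤ v j)
    (hwd : d ≠ a ∧ w d = u d ∨ d ≠ b ∧ w d = v d)
    (hd : ∀ j, j ≠ c → j ≠ d → x d + w d < x j + w j) :
    (d ≠ a ∧ d ≠ b) ∧ (w d = u d ∧ w d = v d) ∧ x c + u c = x d + u d := by
  obtain ⟨hda, hwu'⟩ | ⟨hdb, hwv'⟩ := hwd
  · obtain ⟨hdb, huvd, hx⟩ := tie_of_forall_lt_of_eq hxu hxv hca hcb huv hwu hwv hda hwu' hd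
    exact ⟨⟨hda, hdb⟩, ⟨hwu', hwu'.trans huvd⟩, hx⟩
  · obtain ⟨hda, hvu, hx⟩ := tie_of_forall_lt_of_eq hxv hxu hcb hca huv.symm hwv hwu hdb hwv' hd
    exact ⟨⟨hda, hdb⟩, ⟨hwv'.trans hvu, hwv'⟩, by rwa [huv, ← hvu]⟩

/-- The member `u ⊕ (t ⊙ v)` of the tropical pencil spanned by `u` and `v`, where `u a` and `v b`
are read as `∞`. For `t = u c - v c` it eliminates the variable `c` from the two equations. -/
def tropPencil [DecidableEq ι] (a b : ι) (u v : ι → ℝ) (t : ℝ) : ι → ℝ := fun j =>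
  if j = a then v a + t else if j = b then u b else min (u j) (v j + t)

/-- The minimum of `x j + w j` is attained exactly at `{c, d}` for no point `x` of `X`. -/
def AvoidsTie (X : Set (ι → ℝ)) (w : ι → ℝ) (c d : ι) : Prop :=
  ∀ x ∈ X, ¬ (x c + w c = x d + w d ∧ ∀ j, j ≠ c → j ≠ d → x c + w c < x j + w j)

lemma AvoidsTie.symm (h : AvoidsTie X w c d) : AvoidsTie X w d c := fun x hx ⟨heq, hlt⟩ =>
  h x hx ⟨heq.symm, fun j hjc hjd => heq ▸ hlt j hjd hjc⟩

lemma avoidsTie_of_subset_tropHyperplane (hX : X ⊆ tropHyperplane c v) (hdc : d ≠ c)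
    (h : ∀ j, j ≠ c → j ≠ d → v d - w d ≤ v j - w j) : AvoidsTie X w c d := by
  rintro x hx ⟨heq, hlt⟩
  obtain ⟨j, hjc, hjd, hj⟩ := hX hx d hdc
  have := h j hjc hjd
  have := hlt j hjc hjd
  linarith

lemma tropPencil_apply_left [DecidableEq ι] : tropPencil a b u v t a = v a + t := if_pos rfl

lemma tropPencil_apply_right [DecidableEq ι] (hab : a ≠ b) : tropPencil a b u v t b = u b := by
  rw [tropPencil, if_neg hab.symm, if_pos rfl]

lemma tropPencil_apply [DecidableEq ι] (hca : c ≠ a) (hcb : c ≠ b) :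
    tropPencil a b u v t c = min (u c) (v c + t) := by
  rw [tropPencil, if_neg hca, if_neg hcb]

lemma tropPencil_le_left [DecidableEq ι] (hab : a ≠ b) (hca : c ≠ a) :
    tropPencil a b u v t c ≤ u c := by
  obtain rfl | hcb := eq_or_ne c b
  · exact (tropPencil_apply_right hab).le
  · exact tropPencil_apply hca hcb ▸ min_le_left _ _

lemma tropPencil_le_right [DecidableEq ι] (hcb : c ≠ b) : tropPencil a b u v t c ≤ v c + t := by
  obtain rfl | hca := eq_or_ne c a
  · exact tropPencil_apply_left.le
  · exact tropPencil_apply hca hcb ▸ min_le_right _ _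

lemma tropPencil_eq_or [DecidableEq ι] (hab : a ≠ b) (c : ι) :
    c ≠ a ∧ tropPencil a b u v t c = u c ∨ c ≠ b ∧ tropPencil a b u v t c = v c + t := by
  obtain rfl | hca := eq_or_ne c a
  · exact Or.inr ⟨hab, tropPencil_apply_left⟩
  · obtain rfl | hcb := eq_or_ne c b
    · exact Or.inl ⟨hca, tropPencil_apply_right hab⟩
    · rw [tropPencil_apply hca hcb]
      exact (min_choice _ _).imp (And.intro hca) (And.intro hcb)

theorem subset_tropHyperplane_tropPencil [DecidableEq ι] (hab : a ≠ b)
    (hu : X ⊆ tropHyperplane a u) (hv : X ⊆ tropHyperplane b v) (hca : c ≠ a) (hcb : c ≠ b)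
    (htie : ∀ d, d ≠ a → d ≠ b → d ≠ c → u d - v d = u c - v c →
      AvoidsTie X (tropPencil a b u v (u c - v c)) c d) :
    X ⊆ tropHyperplane c (tropPencil a b u v (u c - v c)) := by
  intro x hx d hdc
  set t := u c - v c with ht
  have hxv : x ∈ tropHyperplane b fun j => v j + t := by
    rw [tropHyperplane_eq_of_forall_ne fun _ _ => rfl]
    exact hv hx
  have huv : u c = v c + t := by rw [ht, add_sub_cancel]
  by_contra! hd
  obtain ⟨⟨hda, hdb⟩, ⟨hwu, hwv⟩, hxcd⟩ := tie_of_forall_lt (hu hx) hxv hca hcb huv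
    (fun _ => tropPencil_le_left hab) (fun _ => tropPencil_le_right) (tropPencil_eq_or hab d) hd
  have hwc : tropPencil a b u v t c = u c := by rw [tropPencil_apply hca hcb, ← huv, min_self]
  have heq : x c + tropPencil a b u v t c = x d + tropPencil a b u v t d := by rw [hwc, hwu, hxcd]
  exact htie d hda hdb hdc (by rw [← hwu, hwv, add_sub_cancel_left]) x hx
    ⟨heq, fun j hjc hjd => heq ▸ hd j hjc hjd⟩

lemma subset_tropHyperplane_add_single [DecidableEq ι] {s : ℝ} {l : ι → ℝ} (hab : a ≠ b)
    (hca : c ≠ a) (hcb : c ≠ b) (hs : 0 < s) (ha : X ⊆ tropHyperplane a l)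
    (hb : X ⊆ tropHyperplane b (l + Pi.single c s)) :
    X ⊆ tropHyperplane c (l + Pi.single b s) := by
  have hdiff : l c - (l + Pi.single c s : ι → ℝ) c = -s := by simp
  have hc := subset_tropHyperplane_tropPencil hab ha hb hca hcb fun d _ _ hdc htie => by
    rw [hdiff, Pi.add_apply, Pi.single_eq_of_ne hdc] at htie
    linarith
  rw [hdiff] at hc
  rw [tropHyperplane_eq_of_forall_ne (t := s)]
  · exact hc
  intro i hic
  obtain rfl | hia := eq_or_ne i a
  · rw [tropPencil_apply_left]
    simp [hic, hab]
  obtain rfl | hib := eq_or_ne i b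
  · simp [tropPencil_apply_right hab]
  · simp [tropPencil_apply hia hib, hic, hib, hs.le]

lemma min_update_eq_add [DecidableEq ι] {M : ℝ} (hu : ∀ i, |u i| ≤ M) (hv : ∀ i, |v i| ≤ M)
    (hab : a ≠ b) (hca : c ≠ a) :
    min (Function.update u a (3 * M) c + Function.update v b (3 * M) a)
      (Function.update u a (3 * M) a + Function.update v b (3 * M) c) = u c + v a := by
  have huc := abs_le.1 (hu c)
  have hva := abs_le.1 (hv a)
  have hvc := abs_le.1 (hv c)
  rw [Function.update_of_ne hca, Function.update_of_ne hab, Function.update_self]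
  obtain rfl | hcb := eq_or_ne c b
  · rw [Function.update_self, min_eq_left (by linarith)]
  · rw [Function.update_of_ne hcb, min_eq_left (by linarith)]

lemma min_update_eq_tropPencil_add [DecidableEq ι] {M : ℝ} (hu : ∀ i, |u i| ≤ M)
    (hv : ∀ i, |v i| ≤ M) (hab : a ≠ b) (hca : c ≠ a) (hcb : c ≠ b) (d : ι) :
    min (Function.update u a (3 * M) d + Function.update v b (3 * M) c)
      (Function.update u a (3 * M) c + Function.update v b (3 * M) d) =
      tropPencil a b u v (u c - v c) d + v c := by
  have huc := abs_le.1 (hu c)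
  have hvc := abs_le.1 (hv c)
  rw [Function.update_of_ne hca, Function.update_of_ne hcb]
  obtain rfl | hda := eq_or_ne d a
  · have hvd := abs_le.1 (hv d)
    rw [tropPencil_apply_left, Function.update_self, Function.update_of_ne hab,
      min_eq_right (by linarith)]
    ring
  rw [Function.update_of_ne hda]
  obtain rfl | hdb := eq_or_ne d b
  · have hud := abs_le.1 (hu d)
    rw [tropPencil_apply_right hab, Function.update_self, min_eq_left (by linarith)]
  · rw [tropPencil_apply hda hdb, Function.update_of_ne hdb, ← min_add_add_right]
    congr 1
    ring

theorem exists_subset_stableIntersection [Finite ι] [DecidableEq ι] (hab : a ≠ b)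
    (hu : X ⊆ tropHyperplane a u) (hv : X ⊆ tropHyperplane b v)
    (htie : ∀ c d, c ≠ a → c ≠ b → d ≠ a → d ≠ b → d ≠ c → u d - v d = u c - v c →
      AvoidsTie X (tropPencil a b u v (u c - v c)) c d) :
    ∃ u' v', X ⊆ stableIntersection u' v' := by
  obtain ⟨M, hM⟩ := (Set.finite_range fun i => max |u i| |v i|).bddAbove
  have huM (i : ι) : |u i| ≤ M := (le_max_left _ _).trans (hM ⟨i, rfl⟩)
  have hvM (i : ι) : |v i| ≤ M := (le_max_right _ _).trans (hM ⟨i, rfl⟩)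
  -- The bound `3 * M` is large enough to play the role of the coefficient `∞` in all minors.
  refine ⟨Function.update u a (3 * M), Function.update v b (3 * M), Set.subset_iInter fun c => ?_⟩
  obtain rfl | hca := eq_or_ne c a
  · rwa [tropHyperplane_eq_of_forall_ne fun i => min_update_eq_add huM hvM hab]
  obtain rfl | hcb := eq_or_ne c b
  · rwa [tropHyperplane_eq_of_forall_ne fun i hi => by
      simpa only [min_comm, add_comm] using min_update_eq_add hvM huM hab.symm hi]
  · rw [tropHyperplane_eq_of_forall_ne fun i _ =>
      min_update_eq_tropPencil_add huM hvM hab hca hcb i]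
    exact subset_tropHyperplane_tropPencil hab hu hv hca hcb (htie c · hca hcb)

end Elimination

section FiveCoordinates

variable {X : Set (Fin 5 → ℝ)} {a b c d e : Fin 5} {s : ℝ} {l u v w : Fin 5 → ℝ}

lemma eq_or_eq_of_nodup (h : [a, b, c, d, e].Nodup) (i : Fin 5) :
    i = a ∨ i = b ∨ i = c ∨ i = d ∨ i = e := by
  have huniv : [a, b, c, d, e].toFinset = Finset.univ :=
    Finset.eq_univ_of_card _ (List.toFinset_card_of_nodup h)
  have hi := Finset.mem_univ i
  rw [← huniv] at hi
  simpa using hi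

lemma avoidsTie_tropPencil (h : [a, b, c, d, e].Nodup) (hX : X ⊆ tropHyperplane c w)
    (htie : u d - v d = u c - v c) (ha : w d - u d ≤ w a - v a - (u c - v c))
    (hb : w d - u d ≤ w b - u b)
    (he : w d - u d ≤ w e - u e ∨ w d - u d ≤ w e - v e - (u c - v c)) :
    AvoidsTie X (tropPencil a b u v (u c - v c)) c d := by
  have hne : a ≠ b ∧ d ≠ a ∧ d ≠ b ∧ e ≠ a ∧ e ≠ b ∧ d ≠ c := by grind
  obtain ⟨hab, hda, hdb, hea, heb, hdc⟩ := hne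
  refine avoidsTie_of_subset_tropHyperplane hX hdc fun j hjc hjd => ?_
  rw [tropPencil_apply hda hdb, ← htie, add_sub_cancel, min_self]
  rw [← htie] at ha he
  obtain rfl | rfl | rfl | rfl | rfl := eq_or_eq_of_nodup h j
  · rw [tropPencil_apply_left]
    linarith
  · rwa [tropPencil_apply_right hab]
  · exact absurd rfl hjc
  · exact absurd rfl hjd
  · rw [tropPencil_apply hea heb]
    rcases he with he | he
    · linarith [min_le_left (u j) (v j + (u d - v d))]
    · linarith [min_le_right (u j) (v j + (u d - v d))]

lemma exists_subset_stableIntersection_of_nodup (h : [a, b, c, d, e].Nodup)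
    (hu : X ⊆ tropHyperplane a u) (hv : X ⊆ tropHyperplane b v)
    (hcd : u d - v d = u c - v c → AvoidsTie X (tropPencil a b u v (u c - v c)) c d)
    (hce : u e - v e = u c - v c → AvoidsTie X (tropPencil a b u v (u c - v c)) c e)
    (hde : u e - v e = u d - v d → AvoidsTie X (tropPencil a b u v (u d - v d)) d e) :
    ∃ u' v', X ⊆ stableIntersection u' v' := by
  have hsymm {i j : Fin 5}
      (hij : u j - v j = u i - v i → AvoidsTie X (tropPencil a b u v (u i - v i)) i j)
      (hji : u i - v i = u j - v j) : AvoidsTie X (tropPencil a b u v (u j - v j)) j i :=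
    hji ▸ (hij hji.symm).symm
  refine exists_subset_stableIntersection (by grind) hu hv fun i j hia hib hja hjb hji => ?_
  obtain rfl | rfl | rfl | rfl | rfl := eq_or_eq_of_nodup h i <;>
    obtain rfl | rfl | rfl | rfl | rfl := eq_or_eq_of_nodup h j <;>
    first
      | contradiction
      | assumption
      | exact hsymm ‹_›

lemma exists_subset_stableIntersection_of_le (h : [a, b, c, d, e].Nodup) (hs : 0 < s)
    (ha : X ⊆ tropHyperplane a l) (hb : X ⊆ tropHyperplane b (l + Pi.single c s))
    (hc : X ⊆ tropHyperplane c (l + Pi.single b s)) (hd : X ⊆ tropHyperplane d w)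
    (hbc : w b - l b ≤ w c - l c) (hae : w a - l a = w e - l e → w c - l c ≤ w a - l a) :
    ∃ u v, X ⊆ stableIntersection u v := by
  have hcc : (l + Pi.single c s : Fin 5 → ℝ) c = l c + s := by simp
  have hbb : (l + Pi.single b s : Fin 5 → ℝ) b = l b + s := by simp
  have hjc {j : Fin 5} (hj : j ≠ c) : (l + Pi.single c s : Fin 5 → ℝ) j = l j := by simp [hj]
  have hjb {j : Fin 5} (hj : j ≠ b) : (l + Pi.single b s : Fin 5 → ℝ) j = l j := by simp [hj]
  have hne : (a ≠ c ∧ b ≠ c ∧ d ≠ c ∧ e ≠ c) ∧ a ≠ b ∧ d ≠ b ∧ e ≠ b := by grind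
  obtain ⟨⟨hac, hbc', hdc, hec⟩, hab, hdb, heb⟩ := hne
  refine exists_subset_stableIntersection_of_nodup (a := b) (b := d) (c := a) (d := c) (e := e)
    (by grind) hb hd (fun htie => ?_) (fun htie => ?_) (fun htie => ?_)
  · rw [hcc, hjc hac] at htie
    apply avoidsTie_tropPencil (e := e) (by grind) ha <;>
      simp only [hcc, hjc hac, hjc hdc, hjc hec] <;> grind
  · rw [hjc hac, hjc hec] at htie
    have := hae (by linarith)
    apply avoidsTie_tropPencil (e := c) (by grind) ha <;>
      simp only [hcc, hjc hac, hjc hdc, hjc hec] <;> grind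
  · rw [hcc, hjc hec] at htie
    apply avoidsTie_tropPencil (e := a) (by grind) hc <;>
      simp only [hcc, hbb, hjb hab, hjb hdb, hjb heb, hjc hac, hjc hdc, hjc hec] <;> grind

lemma exists_subset_stableIntersection_of_add_single_of_le (h : [a, b, c, d, e].Nodup)
    (hs : 0 < s) (ha : X ⊆ tropHyperplane a l) (hb : X ⊆ tropHyperplane b (l + Pi.single c s))
    (hc : X ⊆ tropHyperplane c (l + Pi.single b s)) (hd : X ⊆ tropHyperplane d w)
    (hbc : w b - l b ≤ w c - l c) : ∃ u v, X ⊆ stableIntersection u v := by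
  have hne : a ≠ c ∧ d ≠ c ∧ e ≠ c := by grind
  obtain ⟨hac', hdc, hec⟩ := hne
  have hcc : (l + Pi.single c s : Fin 5 → ℝ) c = l c + s := by simp
  have hjc {j : Fin 5} (hj : j ≠ c) : (l + Pi.single c s : Fin 5 → ℝ) j = l j := by simp [hj]
  by_cases hae : w a - l a = w e - l e → w c - l c ≤ w a - l a
  · exact exists_subset_stableIntersection_of_le h hs ha hb hc hd hbc hae
  push Not at hae
  obtain ⟨hae, hac⟩ := hae
  obtain hab | hab := le_or_gt (w a - l a) (w b - l b)
  · refine exists_subset_stableIntersection_of_nodup h ha hb (fun htie => ?_) (fun htie => ?_)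
      fun htie => avoidsTie_tropPencil (e := c) (by grind) hd htie ?_ ?_ (.inl ?_)
    all_goals simp only [hcc, hjc hac', hjc hdc, hjc hec] at htie ⊢
    all_goals linarith
  · exact exists_subset_stableIntersection_of_nodup (a := a) (b := d) (c := b) (d := c) (e := e)
      (by grind) ha hd (fun _ => by linarith) (fun _ => by linarith) fun _ => by linarith

lemma exists_subset_stableIntersection_of_add_single (h : [a, b, c, d, e].Nodup) (hs : 0 < s)
    (ha : X ⊆ tropHyperplane a l) (hb : X ⊆ tropHyperplane b (l + Pi.single c s))
    (hd : X ⊆ tropHyperplane d w) : ∃ u v, X ⊆ stableIntersection u v := by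
  -- Eliminating `c` makes the configuration symmetric in `b` and `c`.
  have hc := subset_tropHyperplane_add_single (by grind) (by grind) (by grind) hs ha hb
  obtain hbc | hcb := le_total (w b - l b) (w c - l c)
  · exact exists_subset_stableIntersection_of_add_single_of_le h hs ha hb hc hd hbc
  · exact exists_subset_stableIntersection_of_add_single_of_le (b := c) (c := b) (e := e)
      (by grind) hs ha hc hb hd hcb

lemma exists_subset_stableIntersection_of_sub_lt (h : [a, b, c, d, e].Nodup)
    (hu : X ⊆ tropHyperplane a u) (hv : X ⊆ tropHyperplane b v) (hw : X ⊆ tropHyperplane d w)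
    (hde : u d - v d = u e - v e) (hcd : u c - v c < u d - v d) :
    ∃ u' v', X ⊆ stableIntersection u' v' := by
  set r := u d - v d with hr
  set l := Function.update u a (v a + r) with hl
  have hne : (a ≠ b ∧ a ≠ c) ∧ c ≠ a ∧ d ≠ a ∧ d ≠ c ∧ e ≠ a ∧ e ≠ c := by grind
  obtain ⟨⟨hab, hac⟩, hca, hda, hdc, hea, hec⟩ := hne
  have hla : l a = v a + r := Function.update_self ..
  have hlj {j : Fin 5} (hj : j ≠ a) : l j = u j := Function.update_of_ne hj ..
  refine exists_subset_stableIntersection_of_add_single (l := l) h (sub_pos.2 hcd) ?_ ?_ hw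
  · rwa [tropHyperplane_eq_of_forall_ne (w := u) (t := 0)]
    intro i hi
    rw [hlj hi, add_zero]
  · rwa [tropHyperplane_eq_of_forall_ne (w := v) (t := r)]
    intro i hib
    obtain rfl | rfl | rfl | rfl | rfl := eq_or_eq_of_nodup h i
    · rw [Pi.add_apply, Pi.single_eq_of_ne hac, add_zero, hla]
    · exact absurd rfl hib
    · rw [Pi.add_apply, Pi.single_eq_same, hlj hca]
      ring
    · rw [Pi.add_apply, Pi.single_eq_of_ne hdc, hlj hda, hr]
      ring
    · rw [Pi.add_apply, Pi.single_eq_of_ne hec, hlj hea, hde]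
      ring

theorem sub_eq_sub_of_not_subset {z : Fin 5 → Fin 5 → ℝ}
    (hz : ∀ k, X ⊆ tropHyperplane k (z k)) (hX : ¬ ∃ u v, X ⊆ stableIntersection u v)
    (h : [a, b, c, d, e].Nodup) : z a c - z b c = z a d - z b d := by
  have hsub {a b c d e : Fin 5} (h : [a, b, c, d, e].Nodup) (hde : z a d - z b d = z a e - z b e) :
      z a c - z b c = z a d - z b d := by
    obtain hlt | heq | hgt := lt_trichotomy (z a c - z b c) (z a d - z b d)
    · exact (hX (exists_subset_stableIntersection_of_sub_lt h (hz a) (hz b) (hz d) hde hlt)).elim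
    · exact heq
    · exact (hX (exists_subset_stableIntersection_of_sub_lt (a := b) (b := a) (c := c) (d := d)
        (e := e) (by clear * - h; grind) (hz b) (hz a) (hz d) (by linarith) (by linarith))).elim
  by_contra hcd
  have hde (hde : z a e - z b e = z a d - z b d) : False := hcd (hsub h hde.symm)
  have hce (hce : z a e - z b e = z a c - z b c) : False :=
    hcd (hsub (c := d) (d := c) (e := e) (by clear * - h; grind) hce.symm).symm
  exact hX (exists_subset_stableIntersection_of_nodup h (hz a) (hz b)
    (fun hdc => (hcd hdc.symm).elim) (fun h => (hce h).elim) fun h => (hde h).elim)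

theorem exists_subset_stableIntersection_of_forall {z : Fin 5 → Fin 5 → ℝ}
    (hz : ∀ k, X ⊆ tropHyperplane k (z k)) : ∃ u v, X ⊆ stableIntersection u v := by
  by_contra hX
  have hpar {a b c d e : Fin 5} (h : [a, b, c, d, e].Nodup) :=
    sub_eq_sub_of_not_subset hz hX h
  have havoid {a b c d e : Fin 5} (h : [a, b, c, d, e].Nodup)
      (htie : z a d - z b d = z a c - z b c) :
      AvoidsTie X (tropPencil a b (z a) (z b) (z a c - z b c)) c d := by
    have hb := hpar (a := c) (b := a) (c := d) (d := b) (e := e) (by clear * - h; grind)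
    have he := hpar (a := c) (b := a) (c := d) (d := e) (e := b) (by clear * - h; grind)
    have ha := hpar (a := c) (b := b) (c := d) (d := a) (e := e) (by clear * - h; grind)
    exact avoidsTie_tropPencil h (hz c) htie (by linarith) hb.le (.inl he.le)
  exact hX (exists_subset_stableIntersection_of_nodup (a := 0) (b := 1) (c := 2) (d := 3) (e := 4)
    (by decide) (hz 0) (hz 1) (havoid (e := 4) (by decide)) (havoid (e := 3) (by decide))
    (havoid (e := 2) (by decide)))

end FiveCoordinates

section Lifting

open scoped Matrix

lemma exists_injective_forall_ne_zero {ι R : Type*} [Countable ι] [AddGroup R] [Infinite R] :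
    ∃ c : ι → R, Function.Injective c ∧ ∀ i, c i ≠ 0 := by
  obtain ⟨f, hf⟩ := exists_injective_nat (Option ι)
  have hinj := (Infinite.natEmbedding R).injective.comp hf
  exact ⟨fun i => Infinite.natEmbedding R (f (some i)) - Infinite.natEmbedding R (f none),
    fun i j hij => Option.some_injective _ (hinj (sub_left_injective hij)),
    fun i => sub_ne_zero.2 (hinj.ne (Option.some_ne_none i))⟩

lemma orderTop_single_sub_single {Γ R : Type*} [LinearOrder Γ] [AddCommGroup R] {a b : Γ} {α β : R}
    (hα : α ≠ 0) (hβ : β ≠ 0) (hαβ : α ≠ β) :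
    (HahnSeries.single a α - HahnSeries.single b β).orderTop = (min a b : Γ) := by
  obtain hlt | rfl | hgt := lt_trichotomy a b
  · rw [HahnSeries.orderTop_sub (by simpa [hα, hβ] using hlt), HahnSeries.orderTop_single hα,
      min_eq_left hlt.le]
  · rw [← HahnSeries.single_sub, HahnSeries.orderTop_single (sub_ne_zero.2 hαβ), min_self]
  · rw [← HahnSeries.orderTop_neg, neg_sub, HahnSeries.orderTop_sub (by simpa [hα, hβ] using hgt),
      HahnSeries.orderTop_single hβ, min_eq_right hgt.le]

variable {ι κ ρ Γ F : Type*} [Field F]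

theorem exists_forall_orderTop_sum_single_mul_eq [Finite ι] [Finite ρ] [AddCommGroup Γ]
    [LinearOrder Γ] [IsOrderedAddMonoid Γ] [Infinite F] {S : Finset ι} {x : ι → Γ}
    {d : ρ → ι → HahnSeries Γ F} {g : ρ → Γ} (hle : ∀ r, ∀ k ∈ S, g r ≤ x k + (d r k).orderTop)
    (hex : ∀ r, ∃ k ∈ S, x k + (d r k).orderTop = g r) :
    ∃ c : ι → F, (∀ k, c k ≠ 0) ∧
      ∀ r, (∑ k ∈ S, HahnSeries.single (x k) (c k) * d r k).orderTop = g r := by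
  classical
  let leading (r : ρ) : Module.Dual F (ι → F) :=
    ∑ k ∈ S, (d r k).coeff (g r - x k) • LinearMap.proj k
  have hleading (r : ρ) (c : ι → F) :
      (∑ k ∈ S, HahnSeries.single (x k) (c k) * d r k).coeff (g r) = leading r c := by
    simp only [leading, HahnSeries.coeff_sum, HahnSeries.coeff_single_mul, LinearMap.sum_apply,
      LinearMap.smul_apply, LinearMap.proj_apply, smul_eq_mul]
    exact Finset.sum_congr rfl fun k _ => mul_comm _ _
  have hne (r : ρ) : ∃ c, leading r c ≠ 0 := by
    obtain ⟨k, hk, hord⟩ := hex r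
    refine ⟨Pi.single k 1, ?_⟩
    have hdk : (d r k).orderTop = (g r - x k : Γ) :=
      (WithTop.add_left_inj WithTop.coe_ne_top).1 (by rw [hord, ← WithTop.coe_add, add_sub_cancel])
    simpa [leading, Pi.single_apply, hk] using HahnSeries.coeff_orderTop_ne hdk
  obtain ⟨c, hc⟩ := Module.Dual.exists_forall_ne_zero_of_forall_exists
    (Sum.elim (fun k : ι => LinearMap.proj k) leading)
    (Sum.rec (fun k => ⟨1, one_ne_zero⟩) hne)
  have hc₀ (k : ι) : c k ≠ 0 := hc (.inl k)
  refine ⟨c, hc₀, fun r => le_antisymm ?_ ?_⟩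
  · exact HahnSeries.orderTop_le_of_coeff_ne_zero (hleading r c ▸ hc (.inr r))
  · refine HahnSeries.le_orderTop_iff_forall.2 fun j hj => ?_
    rw [HahnSeries.coeff_sum]
    refine Finset.sum_eq_zero fun k hk => HahnSeries.coeff_eq_zero_of_lt_orderTop ?_
    rw [HahnSeries.orderTop_mul, HahnSeries.orderTop_single (hc₀ k)]
    exact hj.trans_le (hle r k hk)

lemma exists_dotProduct_eq_zero [Fintype ι] [DecidableEq ι] {p q : ι → F} {i j : ι} (hij : i ≠ j)
    (hD : p i * q j - p j * q i ≠ 0) (y : ι → F) :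
    ∃ z : ι → F, (∀ k, k ≠ i → k ≠ j → z k = y k) ∧
      z i * (p i * q j - p j * q i) = -∑ k ∈ {i, j}ᶜ, y k * (p k * q j - p j * q k) ∧
      z j * (p i * q j - p j * q i) = ∑ k ∈ {i, j}ᶜ, y k * (p k * q i - p i * q k) ∧
      p ⬝ᵥ z = 0 ∧ q ⬝ᵥ z = 0 := by
  have hsum (r : ι) : ∑ k ∈ {i, j}ᶜ, y k * (p k * q r - p r * q k) =
      q r * (∑ k ∈ {i, j}ᶜ, p k * y k) - p r * ∑ k ∈ {i, j}ᶜ, q k * y k := by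
    rw [Finset.mul_sum, Finset.mul_sum, ← Finset.sum_sub_distrib]
    exact Finset.sum_congr rfl fun k _ => by ring
  simp only [hsum]
  set s := ∑ k ∈ {i, j}ᶜ, p k * y k
  set t := ∑ k ∈ {i, j}ᶜ, q k * y k
  let z : ι → F := Function.update (Function.update y i
    (-(q j * s - p j * t) / (p i * q j - p j * q i))) j
    ((q i * s - p i * t) / (p i * q j - p j * q i))
  have hzi : z i * (p i * q j - p j * q i) = -(q j * s - p j * t) := by
    simp [z, hij, div_mul_cancel₀ _ hD]
  have hzj : z j * (p i * q j - p j * q i) = q i * s - p i * t := by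
    simp [z, div_mul_cancel₀ _ hD]
  have hz (k : ι) (hki : k ≠ i) (hkj : k ≠ j) : z k = y k := by simp [z, hki, hkj]
  have hdot (f : ι → F) : f ⬝ᵥ z = f i * z i + f j * z j + ∑ k ∈ {i, j}ᶜ, f k * y k := by
    rw [dotProduct, ← Finset.sum_add_sum_compl {i, j}, Finset.sum_pair hij]
    congr 1
    refine Finset.sum_congr rfl fun k hk => ?_
    simp only [Finset.mem_compl, Finset.mem_insert, Finset.mem_singleton, not_or] at hk
    rw [hz k hk.1 hk.2]
  refine ⟨z, hz, hzi, hzj, mul_right_cancel₀ hD ?_, mul_right_cancel₀ hD ?_⟩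
  · rw [hdot]
    linear_combination p i * hzi + p j * hzj
  · rw [hdot]
    linear_combination q i * hzi + q j * hzj

lemma exists_ne_forall_le {α : Type*} [LinearOrder α] [Finite ι] [Nontrivial ι] (f : ι → ι → α) :
    ∃ i j, i ≠ j ∧ ∀ k l, k ≠ l → f i j ≤ f k l := by
  have : Nonempty {r : ι × ι // r.1 ≠ r.2} :=
    let ⟨i, j, hij⟩ := exists_pair_ne ι
    ⟨⟨(i, j), hij⟩⟩
  obtain ⟨⟨⟨i, j⟩, hij⟩, hmin⟩ :=
    Finite.exists_min fun r : {r : ι × ι // r.1 ≠ r.2} => f r.1.1 r.1.2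
  exact ⟨i, j, hij, fun k l hkl => hmin ⟨(k, l), hkl⟩⟩

lemma exists_ne_and_add_eq {P : ι → ι → ℝ} {x : ι → ℝ} {i j : ι}
    (hx : x ∈ tropHyperplane j (P · j)) (hij : i ≠ j)
    (hmin : ∀ k l, k ≠ l → x i + x j + P i j ≤ x k + x l + P k l) :
    ∃ k, k ≠ i ∧ k ≠ j ∧ x k + P k j = x i + P i j := by
  obtain ⟨k, hkj, hki, hle⟩ := hx i hij
  exact ⟨k, hki, hkj, by linarith [hmin k j hkj]⟩

lemma exists_forall_orderTop_sum_minor_eq [Fintype ι] [DecidableEq ι] [Infinite F]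
    {p q : ι → HahnSeries ℝ F} {P : ι → ι → ℝ}
    (hP : ∀ i j, i ≠ j → (p i * q j - p j * q i).orderTop = P i j) {x : ι → ℝ}
    (hx : ∀ k, x ∈ tropHyperplane k (P · k)) {i j : ι} (hij : i ≠ j) (hji : P j i = P i j)
    (hmin : ∀ k l, k ≠ l → x i + x j + P i j ≤ x k + x l + P k l) :
    ∃ c : ι → F, (∀ k, c k ≠ 0) ∧ ∀ r ∈ ({i, j} : Set ι),
      (∑ k ∈ {i, j}ᶜ, HahnSeries.single (x k) (c k) * (p k * q r - p r * q k)).orderTop =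
        (x i + x j + P i j - x r : ℝ) := by
  have hord (k r : ι) (hkr : k ≠ r) :
      x k + (p k * q r - p r * q k).orderTop = (x k + P k r : ℝ) := by
    rw [hP k r hkr, WithTop.coe_add]
  have hattained : ∀ r ∈ ({i, j} : Set ι), ∃ k, (k ≠ i ∧ k ≠ j) ∧ k ≠ r ∧
      x k + P k r = x i + x j + P i j - x r := by
    rintro r (rfl | rfl)
    · obtain ⟨k, hkj, hkr, hk⟩ := exists_ne_and_add_eq (hx r) hij.symm fun k l hkl => by
        linarith [hmin k l hkl]
      exact ⟨k, ⟨hkr, hkj⟩, hkr, by linarith⟩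
    · obtain ⟨k, hki, hkr, hk⟩ := exists_ne_and_add_eq (hx r) hij hmin
      exact ⟨k, ⟨hki, hkr⟩, hkr, by linarith⟩
  obtain ⟨c, hc, hsum⟩ := exists_forall_orderTop_sum_single_mul_eq (F := F) (S := {i, j}ᶜ)
    (d := fun (r : ({i, j} : Set ι)) k => p k * q r - p r * q k)
    (g := fun r => x i + x j + P i j - x r)
    (fun ⟨r, hr⟩ k hk => by
      have hkr : k ≠ r := by
        rintro rfl
        simp_all
      rw [hord k r hkr]
      exact WithTop.coe_le_coe.2 (by linarith [hmin k r hkr]))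
    (fun ⟨r, hr⟩ => by
      obtain ⟨k, ⟨hki, hkj⟩, hkr, hk⟩ := hattained r hr
      exact ⟨k, by simp [hki, hkj], by rw [hord k r hkr, hk]⟩)
  exact ⟨c, hc, fun r hr => hsum ⟨r, hr⟩⟩

theorem exists_orderTop_eq_and_dotProduct_eq_zero [Fintype ι] [Nontrivial ι] [Infinite F]
    {p q : ι → HahnSeries ℝ F} {P : ι → ι → ℝ}
    (hP : ∀ i j, i ≠ j → (p i * q j - p j * q i).orderTop = P i j) {x : ι → ℝ}
    (hx : ∀ k, x ∈ tropHyperplane k (P · k)) :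
    ∃ z : ι → HahnSeries ℝ F, (∀ k, (z k).orderTop = x k) ∧ p ⬝ᵥ z = 0 ∧ q ⬝ᵥ z = 0 := by
  classical
  obtain ⟨i, j, hij, hmin⟩ := exists_ne_forall_le fun i j => x i + x j + P i j
  have hji : P j i = P i j := WithTop.coe_injective (by
    rw [← hP i j hij, ← hP j i hij.symm, ← HahnSeries.orderTop_neg, neg_sub])
  obtain ⟨c, hc, hsum⟩ := exists_forall_orderTop_sum_minor_eq hP hx hij hji hmin
  have hD : p i * q j - p j * q i ≠ 0 := HahnSeries.orderTop_ne_top.1 (by simp [hP i j hij])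
  -- Cramer's rule: the two remaining coordinates are quotients of minors of known order.
  obtain ⟨z, hz, hzi, hzj, hpz, hqz⟩ :=
    exists_dotProduct_eq_zero hij hD fun k => HahnSeries.single (x k) (c k)
  have hcancel {a : HahnSeries ℝ F} {s : ℝ}
      (h : (a * (p i * q j - p j * q i)).orderTop = (s + P i j : ℝ)) : a.orderTop = s := by
    rw [HahnSeries.orderTop_mul, hP i j hij, WithTop.coe_add] at h
    exact (WithTop.add_right_inj WithTop.coe_ne_top).1 h
  refine ⟨z, fun k => ?_, hpz, hqz⟩
  obtain rfl | hki := eq_or_ne k i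
  · refine hcancel ?_
    rw [hzi, HahnSeries.orderTop_neg, hsum j (Or.inr rfl)]
    congr 1
    ring
  obtain rfl | hkj := eq_or_ne k j
  · refine hcancel ?_
    rw [hzj, hsum i (Or.inl rfl)]
    congr 1
    ring
  · rw [hz k hki hkj, HahnSeries.orderTop_single (hc k)]

lemma rank_add_two_le_card [Fintype ι] [Fintype κ] {p q : ι → F} {B : Matrix ι κ F} {i j : ι}
    (hD : p i * q j - p j * q i ≠ 0) (hp : p ᵥ* B = 0) (hq : q ᵥ* B = 0) :
    B.rank + 2 ≤ Fintype.card ι := by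
  set G : Matrix (Fin 2) ι F := Matrix.of ![p, q] with hG
  have hGB : G * B = 0 := by
    ext r k
    fin_cases r
    · exact congrFun hp k
    · exact congrFun hq k
  have hdet : (G.submatrix id ![i, j]).det ≠ 0 := by
    rwa [Matrix.det_fin_two, hG]
  have hrank := G.rank_submatrix_le id ![i, j]
  rw [Matrix.rank_of_det_ne_zero hdet, Fintype.card_fin] at hrank
  have := Matrix.rank_add_rank_le_card_of_mul_eq_zero hGB
  omega

theorem exists_orderTop_eq_and_rank_add_two_le [Fintype ι] [Nontrivial ι] [Fintype κ] [Infinite F]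
    {A : Matrix ι κ ℝ} {u v : ι → ℝ} (hA : Set.range A.col ⊆ stableIntersection u v) :
    ∃ B : Matrix ι κ (HahnSeries ℝ F),
      (∀ i j, (B i j).orderTop = A i j) ∧ B.rank + 2 ≤ Fintype.card ι := by
  obtain ⟨c, hc, hc₀⟩ := exists_injective_forall_ne_zero (ι := ι) (R := F)
  set p : ι → HahnSeries ℝ F := fun i => HahnSeries.single (u i) (c i)
  set q : ι → HahnSeries ℝ F := fun i => HahnSeries.single (v i) 1
  have hP (i j : ι) (hij : i ≠ j) :
      (p i * q j - p j * q i).orderTop = (min (u i + v j) (u j + v i) : ℝ) := by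
    simp only [p, q, HahnSeries.single_mul_single, mul_one]
    exact orderTop_single_sub_single (hc₀ i) (hc₀ j) (hc.ne hij)
  have hcol (k : κ) := exists_orderTop_eq_and_dotProduct_eq_zero hP (x := A.col k)
    (Set.mem_iInter.1 (hA ⟨k, rfl⟩))
  choose z hz hpz hqz using hcol
  obtain ⟨i, j, hij⟩ := exists_pair_ne ι
  have hD : p i * q j - p j * q i ≠ 0 := HahnSeries.orderTop_ne_top.1 (by simp [hP i j hij])
  exact ⟨Matrix.of fun i k => z k i, fun i k => hz k i,
    rank_add_two_le_card hD (funext hpz) (funext hqz)⟩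

end Lifting

lemma ne_zero_and_order_eq_iff {Γ R : Type*} [PartialOrder Γ] [Zero Γ] [Zero R]
    {z : HahnSeries Γ R} {g : Γ} : z ≠ 0 ∧ z.order = g ↔ z.orderTop = g := by
  refine ⟨fun ⟨hz, hg⟩ => hg ▸ (HahnSeries.order_eq_orderTop_of_ne_zero hz).symm, fun h => ?_⟩
  have hz : z ≠ 0 := HahnSeries.orderTop_ne_top.1 (h ▸ WithTop.coe_ne_top)
  exact ⟨hz, WithTop.coe_injective ((HahnSeries.order_eq_orderTop_of_ne_zero hz).trans h)⟩

theorem minors_tropical_basis_5xn_general {F κ : Type*} [Field F] [Infinite F] [Fintype κ]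
    (A : Matrix (Fin 5) κ ℝ)
    (hsing : ∀ (r : Fin 4 → Fin 5) (c : Fin 4 → κ),
      Function.Injective r → Function.Injective c → TropSingular (A.submatrix r c)) :
    ∃ B : Matrix (Fin 5) κ (HahnSeries ℝ F),
      (∀ i j, B i j ≠ 0 ∧ (B i j).order = A i j) ∧ B.rank ≤ 3 := by
  choose z hz using exists_range_col_subset_tropHyperplane hsing
  obtain ⟨u, v, huv⟩ := exists_subset_stableIntersection_of_forall hz
  obtain ⟨B, hB, hrank⟩ := exists_orderTop_eq_and_rank_add_two_le (F := F) huv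
  exact ⟨B, fun i j => ne_zero_and_order_eq_iff.2 (hB i j), Nat.le_of_add_le_add_right hrank⟩

/-- For `n ≥ 4`, every `5 × n` real matrix all of whose `4 × 4` submatrices are tropically
singular (tropical rank at most `3`) admits a lift over `K` of rank at most `3`
(Kapranov rank at most `3`). -/
theorem minors_tropical_basis_5xn (n : ℕ) (hn : 4 ≤ n) (A : Matrix (Fin 5) (Fin n) ℝ)
    (hsing : ∀ (r : Fin 4 → Fin 5) (c : Fin 4 → Fin n),
      Function.Injective r → Function.Injective c → TropSingular (A.submatrix r c)) :
    ∃ B : Matrix (Fin 5) (Fin n) K, IsLift A B ∧ B.rank ≤ 3 :=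
  minors_tropical_basis_5xn_general A hsing
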